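/- For λ, μ ∈ P_n, the coefficient c_{λ,n}^μ(y) in the expansion s_λ(x_{(n)}|y) = Σ_{μ∈P_n} c_{λ,n}^μ(y) s_μ(x_{(n)}) is given by the determinantal formula c_{λ,n}^μ(y) = det( e_{λ_i − μ_j − i + j}(y_1,…,y_{λ_i+n−i}) )_{1≤i,j≤n}, where e_r denotes the r-th elementary symmetric polynomial (with e_0 = 1, e_r = 0 for r < 0 or r exceeding the number of variables). -/

import Mathlib

open Finset MvPolynomial

attribute [local instance] Classical.propDecidable

/-- A partition in `P_n`: a weakly decreasing sequence of naturals. -/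
def IsPartition {n : ℕ} (lam : Fin n → ℕ) : Prop := Antitone lam

/-- The cells of the Young diagram of `lam`, as pairs (row, column), 0-based. -/
noncomputable def cells {n : ℕ} (lam : Fin n → ℕ) : Finset (Fin n × ℕ) :=
  (Finset.univ ×ˢ Finset.range (Finset.univ.sup lam)).filter fun c => c.2 < lam c.1

/-- Semistandardness for a filling with values in `Fin n` (0-based values):
rows weakly increase, columns strictly increase. -/
def IsSSYT {n : ℕ} (lam : Fin n → ℕ) (T : cells lam → Fin n) : Prop :=
  (∀ c d : cells lam, (c : Fin n × ℕ).1 = (d : Fin n × ℕ).1 →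
      (c : Fin n × ℕ).2 ≤ (d : Fin n × ℕ).2 → T c ≤ T d) ∧
  (∀ c d : cells lam, (c : Fin n × ℕ).2 = (d : Fin n × ℕ).2 →
      (c : Fin n × ℕ).1 < (d : Fin n × ℕ).1 → T c < T d)

/-- The y-subscript `a + c(a) - r(a)` of a cell (1-based value and coordinates). -/
def ysub {n : ℕ} (a : Fin n) (c : Fin n × ℕ) : ℤ := (a : ℤ) + 1 + (c.2 : ℤ) - ((c.1 : ℕ) : ℤ)

/-- The Schur polynomial `s_lam(x_{(n)})`, in the ring with `x`-variables
`Sum.inl i` and `y`-variables `Sum.inr k` (`y_k` for `k ≥ 1`). -/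
noncomputable def schurN (n : ℕ) (lam : Fin n → ℕ) : MvPolynomial (Fin n ⊕ ℤ) ℤ :=
  ∑ T ∈ Finset.univ.filter (IsSSYT lam), ∏ c : cells lam, X (Sum.inl (T c))

/-- The factorial Schur polynomial `s_lam(x_{(n)} | y)`. -/
noncomputable def factSchurN (n : ℕ) (lam : Fin n → ℕ) : MvPolynomial (Fin n ⊕ ℤ) ℤ :=
  ∑ T ∈ Finset.univ.filter (IsSSYT lam),
    ∏ c : cells lam,
      (X (Sum.inl (T c)) + X (Sum.inr (ysub (T c) (c : Fin n × ℕ))))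

/-- `e_d(y_1, …, y_p)`, the elementary symmetric polynomial in the variables
`y_1, …, y_p` (which is `0` for `d < 0` and for `d > p`, and `1` for `d = 0`),
as a polynomial in the variables `y_k`, `k : ℤ`. -/
noncomputable def eY (p : ℕ) (d : ℤ) : MvPolynomial ℤ ℤ :=
  if 0 ≤ d then
    ∑ s ∈ Finset.powersetCard d.toNat ((Finset.range p).image fun k => (k + 1 : ℤ)),
      ∏ j ∈ s, X j
  else 0

/-- `h_d(-y_1, …, -y_p)`, the complete homogeneous symmetric polynomial of degree
`d` evaluated at the negated variables `-y_1, …, -y_p` (and `0` for `d < 0`). -/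
noncomputable def hYneg (p : ℕ) (d : ℤ) : MvPolynomial ℤ ℤ :=
  if 0 ≤ d then
    ∑ m ∈ (Finset.range p).sym d.toNat,
      ((m : Multiset ℕ).map fun k => -(X (k + 1 : ℤ) : MvPolynomial ℤ ℤ)).prod
  else 0

/-- The partition `λ^c ∈ P_m` complementary to `λ ∈ P_n` in the `n × m` rectangle:
`λ^c_i = n - λ'_{m+1-i}` (1-based), where `λ'_j = #{k : λ_k ≥ j}` is the conjugate. -/
noncomputable def conjComp (n m : ℕ) (lam : Fin n → ℕ) : Fin m → ℕ :=
  fun i => n - (Finset.univ.filter fun k : Fin n => m - (i : ℕ) ≤ lam k).card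


/-- `(x|y)^p` -/
def fpw {A : Type*} [CommRing A] (Y : ℕ → A) (x : A) (p : ℕ) : A :=
  ∏ k ∈ Finset.range p, (x + Y k)

lemma fpw_telescope {A : Type*} [CommRing A] (Y : ℕ → A) (x z : A) (q p : ℕ) (h : q ≤ p) :
    fpw Y x p = (x - z) * ∑ m ∈ Finset.Ico q p, (∏ k ∈ Finset.Ico (m+1) p, (z + Y k)) * fpw Y x m
      + (∏ k ∈ Finset.Ico q p, (z + Y k)) * fpw Y x q := by
  induction p, h using Nat.le_induction with
  | base => simp
  | succ p hp ih =>
    have h1 : ∑ m ∈ Finset.Ico q p, (∏ k ∈ Finset.Ico (m+1) (p+1), (z + Y k)) * fpw Y x m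
      = (z + Y p) * ∑ m ∈ Finset.Ico q p, (∏ k ∈ Finset.Ico (m+1) p, (z + Y k)) * fpw Y x m := by
      rw [Finset.mul_sum]
      refine Finset.sum_congr rfl fun m hm => ?_
      rw [Finset.mem_Ico] at hm
      rw [Finset.prod_Ico_succ_top (by omega)]
      ring
    rw [Finset.sum_Ico_succ_top hp, h1, Finset.prod_Ico_succ_top hp]
    have h2 : fpw Y x (p+1) = fpw Y x p * (x + Y p) := by
      simp [fpw, Finset.prod_range_succ]
    rw [h2]
    simp only [Finset.Ico_self, Finset.prod_empty, one_mul]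
    linear_combination (z + Y p) * ih

lemma det_row_op {A : Type*} [CommRing A] {n : ℕ} (M B : Matrix (Fin (n+1)) (Fin (n+1)) A)
    (c : Fin n → A) (h0 : ∀ j, M (Fin.last n) j = B (Fin.last n) j)
    (h1 : ∀ i : Fin n, ∀ j, M i.castSucc j = B i.castSucc j + c i * M i.succ j) :
    M.det = B.det := by
  rw [← Matrix.det_submatrix_equiv_self Fin.revPerm M,
    ← Matrix.det_submatrix_equiv_self Fin.revPerm B]
  refine Matrix.det_eq_of_forall_row_eq_smul_add_pred (fun i => c i.rev) ?_ ?_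
  · intro j; simp [h0]
  · intro i j
    simp only [Matrix.submatrix_apply, Fin.revPerm_apply, Fin.rev_succ, Fin.rev_castSucc]
    exact h1 _ _

lemma det_branch {A : Type*} [CommRing A] {n : ℕ} (Y : ℕ → A) (x : Fin (n+1) → A)
    (l : Fin (n+1) → ℕ) (hl : Antitone l) :
    (Matrix.of fun i j => fpw Y (x j) (l i)).det =
      (∏ j : Fin n, (x j.castSucc - x (Fin.last n))) *
      ∑ m ∈ Fintype.piFinset (fun i : Fin n => Finset.Ico (l i.succ) (l i.castSucc)),
        (fpw Y (x (Fin.last n)) (l (Fin.last n)) *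
          ∏ i : Fin n, ∏ k ∈ Finset.Ico (m i + 1) (l i.castSucc), (x (Fin.last n) + Y k)) *
        (Matrix.of fun i j : Fin n => fpw Y (x j.castSucc) (m i)).det := by
  set z := x (Fin.last n) with hz
  let B : Matrix (Fin (n+1)) (Fin (n+1)) A := Matrix.of fun i j =>
    Fin.lastCases (motive := fun _ => A) (fpw Y (x j) (l (Fin.last n)))
      (fun i : Fin n => (x j - z) * ∑ m ∈ Finset.Ico (l i.succ) (l i.castSucc),
        (∏ k ∈ Finset.Ico (m+1) (l i.castSucc), (z + Y k)) * fpw Y (x j) m) i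
  rw [det_row_op _ B (fun i => ∏ k ∈ Finset.Ico (l i.succ) (l i.castSucc), (z + Y k))]
  rotate_left
  · intro j; simp [B]
  · intro i j
    simp only [B, Matrix.of_apply, Fin.lastCases_castSucc]
    exact fpw_telescope Y (x j) z _ _ (hl (Fin.castSucc_le_succ i))
  rw [Matrix.det_succ_column B (Fin.last n), Fin.sum_univ_castSucc, Finset.sum_eq_zero]
  rotate_left
  · intro i _
    simp [B, ← hz]
  have h2 : (B.submatrix (Fin.last n).succAbove (Fin.last n).succAbove).det =
      (∏ j : Fin n, (x j.castSucc - z)) * 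
       ∑ m ∈ Fintype.piFinset (fun i : Fin n => Finset.Ico (l i.succ) (l i.castSucc)),
        (∏ i : Fin n, ∏ k ∈ Finset.Ico (m i + 1) (l i.castSucc), (z + Y k)) *
        (Matrix.of fun i j : Fin n => fpw Y (x j.castSucc) (m i)).det := by
    have : B.submatrix (Fin.last n).succAbove (Fin.last n).succAbove =
      Matrix.of fun i j : Fin n => (x j.castSucc - z) *
        (Matrix.of fun i j : Fin n => ∑ m ∈ Finset.Ico (l i.succ) (l i.castSucc),
        (∏ k ∈ Finset.Ico (m+1) (l i.castSucc), (z + Y k)) * fpw Y (x j.castSucc) m) i j := by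
      ext i j
      simp [B]
    rw [this, Matrix.det_mul_row]
    congr 1
    have := (Matrix.detRowAlternating (n := Fin n) (R := A)).toMultilinearMap.map_sum_finset
      (fun i m => fun j => (∏ k ∈ Finset.Ico (m+1) (l i.castSucc), (z + Y k)) * fpw Y (x j.castSucc) m)
      (fun i : Fin n => Finset.Ico (l i.succ) (l i.castSucc))
    have e : (Matrix.of fun i j : Fin n => ∑ m ∈ Finset.Ico (l i.succ) (l i.castSucc),
        (∏ k ∈ Finset.Ico (m+1) (l i.castSucc), (z + Y k)) * fpw Y (x j.castSucc) m)
      = fun i : Fin n => ∑ m ∈ Finset.Ico (l i.succ) (l i.castSucc), fun j : Fin n =>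
        (∏ k ∈ Finset.Ico (m+1) (l i.castSucc), (z + Y k)) * fpw Y (x j.castSucc) m := by
      ext i j
      simp [Finset.sum_apply]
    rw [e]
    refine Eq.trans this (Finset.sum_congr rfl fun m _ => ?_)
    rw [← Matrix.det_mul_column]
    rfl
  rw [h2]
  simp only [B, Matrix.of_apply, Fin.lastCases_last, Fin.val_last, ← hz, zero_add]
  rw [Even.neg_one_pow ⟨n, rfl⟩, one_mul, mul_left_comm, Finset.mul_sum]
  simp only [mul_assoc]

/-- general factorial Schur -/
noncomputable def genS {A : Type*} [CommRing A] {n : ℕ} (x : Fin n → A) (y : ℤ → A)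
    (lam : Fin n → ℕ) : A :=
  ∑ T ∈ Finset.univ.filter (IsSSYT lam), ∏ c : cells lam, (x (T c) + y (ysub (T c) (c : Fin n × ℕ)))

lemma mem_cells {n : ℕ} (lam : Fin n → ℕ) (c : Fin n × ℕ) : c ∈ cells lam ↔ c.2 < lam c.1 := by
  simp only [cells, Finset.mem_filter, Finset.mem_product, Finset.mem_univ, true_and,
    Finset.mem_range, and_iff_right_iff_imp]
  intro h
  exact lt_of_lt_of_le h (Finset.le_sup (f := lam) (Finset.mem_univ c.1))

lemma row_le {n : ℕ} (lam : Fin n → ℕ) (hl : Antitone lam) (T : cells lam → Fin n)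
    (hT : IsSSYT lam T) : ∀ (r : ℕ) (c : cells lam), (c : Fin n × ℕ).1.val = r → r ≤ (T c).val := by
  intro r
  induction r with
  | zero => intro c _; exact Nat.zero_le _
  | succ r ih =>
    rintro ⟨⟨i, k⟩, hc⟩ h
    simp only at h
    have hi := i.2
    have hk := (mem_cells _ _).1 hc
    have h' : (((⟨r, by omega⟩ : Fin n), k) : Fin n × ℕ) ∈ cells lam := by
      rw [mem_cells]
      refine lt_of_lt_of_le hk (hl ?_)
      rw [Fin.le_def]; simp; omega
    have := ih ⟨_, h'⟩ rfl
    have h2 := hT.2 ⟨_, h'⟩ ⟨_, hc⟩ rfl (by rw [Fin.lt_def]; simp; omega)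
    rw [Fin.lt_def] at h2
    omega

/-- extension by zero -/
def nux {n : ℕ} (nu : Fin n → ℕ) (i : Fin (n+1)) : ℕ :=
  Fin.lastCases (motive := fun _ => ℕ) 0 nu i

@[simp] lemma nux_last {n : ℕ} (nu : Fin n → ℕ) : nux nu (Fin.last n) = 0 := by simp [nux]
@[simp] lemma nux_castSucc {n : ℕ} (nu : Fin n → ℕ) (i : Fin n) : nux nu i.castSucc = nu i := by
  simp [nux]

/-- `nu` is the shape of non-maximal entries -/
def HasSh {n : ℕ} (lam : Fin (n+1) → ℕ) (nu : Fin n → ℕ) (T : cells lam → Fin (n+1)) : Prop :=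
  ∀ c : cells lam, T c ≠ Fin.last n ↔ (c : Fin (n+1) × ℕ).2 < nux nu (c : Fin (n+1) × ℕ).1

/-- interlacing -/
noncomputable def interl {n : ℕ} (lam : Fin (n+1) → ℕ) : Finset (Fin n → ℕ) :=
  Fintype.piFinset fun i : Fin n => Finset.Icc (lam i.succ) (lam i.castSucc)

lemma mem_interl {n : ℕ} (lam : Fin (n+1) → ℕ) (nu : Fin n → ℕ) :
    nu ∈ interl lam ↔ ∀ i : Fin n, lam i.succ ≤ nu i ∧ nu i ≤ lam i.castSucc := by
  simp [interl, Fintype.mem_piFinset]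

lemma exists_sh {n : ℕ} (lam : Fin (n+1) → ℕ) (hl : Antitone lam) (T : cells lam → Fin (n+1))
    (hT : IsSSYT lam T) : ∃ nu ∈ interl lam, HasSh lam nu T := by
  have hex : ∀ i : Fin n, ∃ k, ∀ h : ((i.castSucc, k) : Fin (n+1) × ℕ) ∈ cells lam,
      T ⟨_, h⟩ = Fin.last n := fun i => ⟨lam i.castSucc, fun h => by simp [mem_cells] at h⟩
  refine ⟨fun i => Nat.find (hex i), ?_, ?_⟩
  · rw [mem_interl]
    intro i
    refine ⟨?_, Nat.find_min' _ fun h => by simp [mem_cells] at h⟩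
    by_contra hlt
    push Not at hlt
    have hs := Nat.find_spec (hex i)
    have h1 : ((i.succ, Nat.find (hex i)) : Fin (n+1) × ℕ) ∈ cells lam := by
      rw [mem_cells]; exact hlt
    have h2 : ((i.castSucc, Nat.find (hex i)) : Fin (n+1) × ℕ) ∈ cells lam := by
      rw [mem_cells]; exact lt_of_lt_of_le hlt (hl (Fin.castSucc_le_succ i))
    have h3 := hT.2 ⟨_, h2⟩ ⟨_, h1⟩ rfl (by simp)
    rw [hs h2] at h3
    exact absurd h3 (not_lt.2 (Fin.le_last _))
  · rintro ⟨⟨i, k⟩, hc⟩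
    induction i using Fin.lastCases with
    | last =>
      simp only [nux_last, not_lt_zero, iff_false, not_not]
      have := row_le lam hl T hT n ⟨_, hc⟩ (by simp)
      exact Fin.ext (le_antisymm (Fin.le_last _) (by simpa using this))
    | cast i =>
      simp only [nux_castSucc]
      constructor
      · intro h
        by_contra hk
        push Not at hk
        apply h
        have hs := Nat.find_spec (hex i)
        have h1 : ((i.castSucc, Nat.find (hex i)) : Fin (n+1) × ℕ) ∈ cells lam := by
          rw [mem_cells] at hc ⊢
          exact lt_of_le_of_lt hk hc
        have h3 := hT.1 ⟨_, h1⟩ ⟨_, hc⟩ rfl hk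
        rw [hs h1] at h3
        exact le_antisymm (Fin.le_last _) h3
      · intro h h'
        exact Nat.find_min _ h fun _ => h'

lemma unique_sh {n : ℕ} (lam : Fin (n+1) → ℕ) (T : cells lam → Fin (n+1))
    (nu nu' : Fin n → ℕ) (h1 : nu ∈ interl lam) (h2 : nu' ∈ interl lam)
    (h3 : HasSh lam nu T) (h4 : HasSh lam nu' T) : nu = nu' := by
  rw [mem_interl] at h1 h2
  have key : ∀ i k, k < lam (Fin.castSucc i) → (k < nu i ↔ k < nu' i) := by
    intro i k hk
    have hc : ((i.castSucc, k) : Fin (n+1) × ℕ) ∈ cells lam := by rw [mem_cells]; exact hk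
    have := (h3 ⟨_, hc⟩).symm.trans (h4 ⟨_, hc⟩)
    simpa using this
  ext i
  have a := h1 i
  have b := h2 i
  rcases lt_trichotomy (nu i) (nu' i) with h | h | h
  · have := key i (nu i) (by omega); omega
  · exact h
  · have := key i (nu' i) (by omega); omega

/-- row weight of the removed strip -/
noncomputable def stripW {A : Type*} [CommRing A] {n : ℕ} (z : A) (y : ℤ → A)
    (lam : Fin (n+1) → ℕ) (nu : Fin n → ℕ) : A :=
  ∏ i : Fin (n+1), ∏ k ∈ Finset.Ico (nux nu i) (lam i), (z + y (ysub (Fin.last n) (i, k)))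

lemma emb_mem {n : ℕ} {lam : Fin (n+1) → ℕ} {nu : Fin n → ℕ} (h : nu ∈ interl lam)
    (c : cells nu) : ((c.1.1.castSucc, c.1.2) : Fin (n+1) × ℕ) ∈ cells lam := by
  rw [mem_interl] at h
  rw [mem_cells]
  exact lt_of_lt_of_le ((mem_cells nu c.1).1 c.2) (h c.1.1).2

lemma prod_split {A : Type*} [CommRing A] {n : ℕ} (lam : Fin (n+1) → ℕ) (nu : Fin n → ℕ)
    (h : nu ∈ interl lam) (F : cells lam → A) (G : Fin (n+1) × ℕ → A)
    (hG : ∀ c : cells lam, nux nu c.1.1 ≤ c.1.2 → F c = G c.1) :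
    ∏ c, F c = (∏ c : cells nu, F ⟨_, emb_mem h c⟩) *
      ∏ i : Fin (n+1), ∏ k ∈ Finset.Ico (nux nu i) (lam i), G (i, k) := by
  rw [← Finset.prod_filter_mul_prod_filter_not Finset.univ
    (fun c : cells lam => c.1.2 < nux nu c.1.1)]
  congr 1
  · symm
    refine Finset.prod_bij (fun c _ => ⟨_, emb_mem h c⟩) ?_ ?_ ?_ ?_
    · intro c _
      simpa using (mem_cells _ _).1 c.2
    · rintro ⟨⟨i, k⟩, _⟩ _ ⟨⟨i', k'⟩, _⟩ _ e
      simpa using e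
    · rintro ⟨⟨i, k⟩, hc⟩ hb
      simp only [Finset.mem_filter, Finset.mem_univ, true_and] at hb
      induction i using Fin.lastCases with
      | last => simp at hb
      | cast i =>
        exact ⟨⟨(i, k), by rw [mem_cells]; simpa using hb⟩, Finset.mem_univ _, rfl⟩
    · intros; rfl
  · rw [Finset.prod_sigma']
    refine Finset.prod_bij (fun c _ => ⟨c.1.1, c.1.2⟩) ?_ ?_ ?_ ?_
    · rintro ⟨⟨i, k⟩, hc⟩ hb
      simp only [Finset.mem_filter, Finset.mem_univ, true_and, not_lt] at hb
      simpa using ⟨hb, (mem_cells _ _).1 hc⟩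
    · rintro ⟨⟨i, k⟩, _⟩ _ ⟨⟨i', k'⟩, _⟩ _ e
      simpa using e
    · rintro ⟨i, k⟩ hb
      simp only [Finset.mem_sigma, Finset.mem_univ, true_and, Finset.mem_Ico] at hb
      exact ⟨⟨(i, k), by rw [mem_cells]; exact hb.2⟩, by simpa using hb.1, rfl⟩
    · intro c hb
      simp only [Finset.mem_filter, Finset.mem_univ, true_and, not_lt] at hb
      exact hG c hb

/-- extension of a tableau by maximal entries -/
noncomputable def extT {n : ℕ} (lam : Fin (n+1) → ℕ) (nu : Fin n → ℕ) (T : cells nu → Fin n)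
    (c : cells lam) : Fin (n+1) :=
  Fin.lastCases (motive := fun i => i = c.1.1 → Fin (n+1)) (fun _ => Fin.last n)
    (fun i _ => if h : ((i, c.1.2) : Fin n × ℕ) ∈ cells nu then (T ⟨_, h⟩).castSucc else Fin.last n)
    c.1.1 rfl

lemma extT_last {n : ℕ} (lam : Fin (n+1) → ℕ) (nu : Fin n → ℕ) (T : cells nu → Fin n) (k : ℕ)
    (h : ((Fin.last n, k) : Fin (n+1) × ℕ) ∈ cells lam) : extT lam nu T ⟨_, h⟩ = Fin.last n := by
  simp [extT]

lemma extT_in {n : ℕ} (lam : Fin (n+1) → ℕ) (nu : Fin n → ℕ) (T : cells nu → Fin n) (i : Fin n)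
    (k : ℕ) (h : ((i.castSucc, k) : Fin (n+1) × ℕ) ∈ cells lam) (h' : (i, k) ∈ cells nu) :
    extT lam nu T ⟨_, h⟩ = (T ⟨_, h'⟩).castSucc := by
  simp [extT, h']

lemma extT_out {n : ℕ} (lam : Fin (n+1) → ℕ) (nu : Fin n → ℕ) (T : cells nu → Fin n) 
    (c : cells lam) (h' : nux nu c.1.1 ≤ c.1.2) :
    extT lam nu T c = Fin.last n := by
  obtain ⟨⟨i, k⟩, h⟩ := c
  induction i using Fin.lastCases with
  | last => exact extT_last _ _ _ _ _
  | cast i =>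
    have : (i, k) ∉ cells nu := by rw [mem_cells]; simpa using h'
    simp [extT, this]

lemma extT_hasSh {n : ℕ} (lam : Fin (n+1) → ℕ) (nu : Fin n → ℕ) (T : cells nu → Fin n) :
    HasSh lam nu (extT lam nu T) := by
  intro c
  constructor
  · intro h
    by_contra h'
    exact h (extT_out _ _ _ _ (not_lt.1 h'))
  · obtain ⟨⟨i, k⟩, hc⟩ := c
    induction i using Fin.lastCases with
    | last => simp
    | cast i =>
      intro h
      rw [extT_in _ _ _ _ _ _ (by rw [mem_cells]; simpa using h)]
      exact Fin.castSucc_ne_last _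

lemma extT_ssyt {n : ℕ} (lam : Fin (n+1) → ℕ) (hl : Antitone lam) (nu : Fin n → ℕ)
    (hnu : nu ∈ interl lam) (_hna : Antitone nu) (T : cells nu → Fin n) (hT : IsSSYT nu T) :
    IsSSYT lam (extT lam nu T) := by
  rw [mem_interl] at hnu
  constructor
  · rintro ⟨⟨i, k⟩, hc⟩ ⟨⟨i', k'⟩, hd⟩ h1 h2
    simp only at h1 h2
    subst h1
    by_cases h : nux nu i ≤ k'
    · rw [extT_out lam nu T ⟨(i, k'), hd⟩ h]; exact Fin.le_last _
    · induction i using Fin.lastCases with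
      | last => simp at h
      | cast i =>
        rw [nux_castSucc, not_le] at h
        rw [extT_in lam nu T i k hc (by rw [mem_cells]; simp; omega),
          extT_in lam nu T i k' hd (by rw [mem_cells]; exact h)]
        rw [Fin.castSucc_le_castSucc_iff]
        exact hT.1 _ _ rfl h2
  · rintro ⟨⟨i, k⟩, hc⟩ ⟨⟨i', k'⟩, hd⟩ h1 h2
    simp only at h1 h2
    subst h1
    have hd' := (mem_cells _ _).1 hd
    simp only at hd'
    induction i using Fin.lastCases with
    | last => exact absurd h2 (not_lt.2 (Fin.le_last _))
    | cast i =>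
      have hin : (i, k) ∈ cells nu := by
        rw [mem_cells]
        refine lt_of_lt_of_le hd' (le_trans (hl ?_) (hnu i).1)
        exact Fin.castSucc_lt_iff_succ_le.1 h2
      rw [extT_in lam nu T i k hc hin]
      by_cases h : nux nu i' ≤ k
      · rw [extT_out lam nu T ⟨(i', k), hd⟩ h]; exact Fin.castSucc_lt_last _
      · induction i' using Fin.lastCases with
        | last => simp at h
        | cast i' =>
          rw [nux_castSucc, not_le] at h
          rw [extT_in lam nu T i' k hd (by rw [mem_cells]; exact h)]
          rw [Fin.castSucc_lt_castSucc_iff]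
          exact hT.2 _ _ rfl (by simpa using h2)

lemma interl_anti {n : ℕ} (lam : Fin (n+1) → ℕ) (hl : Antitone lam) (nu : Fin n → ℕ)
    (hnu : nu ∈ interl lam) : Antitone nu := by
  rw [mem_interl] at hnu
  intro i j hij
  rcases hij.eq_or_lt with rfl | h
  · exact le_rfl
  · refine le_trans (hnu j).2 (le_trans (hl ?_) (hnu i).1)
    rw [Fin.le_def]; simpa using h

lemma branch_fixed {A : Type*} [CommRing A] {n : ℕ} (x : Fin (n+1) → A) (y : ℤ → A)
    (lam : Fin (n+1) → ℕ) (hl : Antitone lam) (nu : Fin n → ℕ) (hnu : nu ∈ interl lam) :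
    ∑ T ∈ (Finset.univ.filter (IsSSYT lam)).filter (HasSh lam nu),
      ∏ c : cells lam, (x (T c) + y (ysub (T c) (c : Fin (n+1) × ℕ))) =
    stripW (x (Fin.last n)) y lam nu * genS (fun i => x i.castSucc) y nu := by
  rw [genS, Finset.mul_sum]
  symm
  refine Finset.sum_bij (fun T _ => extT lam nu T) ?_ ?_ ?_ ?_
  · intro T hT
    simp only [Finset.mem_filter, Finset.mem_univ, true_and] at hT ⊢
    exact ⟨extT_ssyt lam hl nu hnu (interl_anti lam hl nu hnu) T hT, extT_hasSh _ _ _⟩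
  · intro T _ T' _ e
    ext c : 1
    have := congrFun e ⟨_, emb_mem hnu c⟩
    rw [extT_in _ _ _ _ _ _ c.2, extT_in _ _ _ _ _ _ c.2] at this
    exact Fin.castSucc_injective _ this
  · intro T hT
    simp only [Finset.mem_filter, Finset.mem_univ, true_and] at hT
    obtain ⟨hT, hs⟩ := hT
    have hne : ∀ c : cells nu, T ⟨_, emb_mem hnu c⟩ ≠ Fin.last n := fun c =>
      (hs _).2 (by simpa using (mem_cells _ _).1 c.2)
    refine ⟨fun c => (T ⟨_, emb_mem hnu c⟩).castPred (hne c), ?_, ?_⟩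
    · simp only [Finset.mem_filter, Finset.mem_univ, true_and]
      constructor
      · intro c d h1 h2
        rw [Fin.castPred_le_castPred_iff]
        exact hT.1 _ _ (by simp [h1]) h2
      · intro c d h1 h2
        rw [Fin.castPred_lt_castPred_iff]
        exact hT.2 _ _ h1 (by simpa using h2)
    · ext c : 1
      by_cases h : nux nu c.1.1 ≤ c.1.2
      · rw [extT_out _ _ _ _ h]
        by_contra h'
        have := (hs c).1 (Ne.symm h')
        omega
      · obtain ⟨⟨i, k⟩, hc⟩ := c
        induction i using Fin.lastCases with
        | last => simp at h
        | cast i =>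
          rw [extT_in _ _ _ _ _ _ (by rw [mem_cells]; simpa using h)]
          simp
  · intro T hT
    rw [prod_split lam nu hnu _ (fun c => x (Fin.last n) + y (ysub (Fin.last n) c)), mul_comm]
    · rw [stripW]
      congr 1
      refine Finset.prod_congr rfl fun c _ => ?_
      rw [extT_in _ _ _ _ _ _ c.2]
      simp [ysub]
    · intro c hc
      rw [extT_out _ _ _ _ hc]

lemma branch {A : Type*} [CommRing A] {n : ℕ} (x : Fin (n+1) → A) (y : ℤ → A)
    (lam : Fin (n+1) → ℕ) (hl : Antitone lam) :
    genS x y lam = ∑ nu ∈ interl lam,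
      stripW (x (Fin.last n)) y lam nu * genS (fun i => x i.castSucc) y nu := by
  rw [← Finset.sum_congr rfl (branch_fixed x y lam hl), genS]
  simp only [Finset.sum_filter (HasSh lam _)]
  rw [Finset.sum_comm]
  refine Finset.sum_congr rfl fun T hT => ?_
  simp only [Finset.mem_filter, Finset.mem_univ, true_and] at hT
  obtain ⟨nu, hnu, hs⟩ := exists_sh lam hl T hT
  rw [Finset.sum_eq_single_of_mem nu hnu, if_pos hs]
  intro nu' hnu' hne
  rw [if_neg]
  intro hs'
  exact hne (unique_sh lam T _ _ hnu' hnu hs' hs)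

/-- Vandermonde -/
def vdm {A : Type*} [CommRing A] : (n : ℕ) → (Fin n → A) → A
  | 0, _ => 1
  | n+1, x => (∏ j : Fin n, (x j.castSucc - x (Fin.last n))) * vdm n (fun i => x i.castSucc)

lemma strip_eq {A : Type*} [CommRing A] {n : ℕ} (z : A) (y : ℤ → A)
    (lam : Fin (n+1) → ℕ) (nu : Fin n → ℕ) :
    stripW z y lam nu = fpw (fun k => y ((k : ℤ) + 1)) z (lam (Fin.last n)) *
      ∏ i : Fin n, ∏ k ∈ Finset.Ico (nu i + (n - 1 - i.val) + 1) (lam i.castSucc + (n - i.val)),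
        (z + y ((k : ℤ) + 1)) := by
  rw [stripW, Fin.prod_univ_castSucc, mul_comm]
  congr 1
  · simp only [nux_last, fpw, ysub, Finset.range_eq_Ico]
    refine Finset.prod_congr rfl fun k _ => ?_
    congr 2
    simp; ring
  · refine Finset.prod_congr rfl fun i _ => ?_
    have hi := i.2
    rw [nux_castSucc, show nu i + (n - 1 - i.val) + 1 = nu i + (n - i.val) by omega,
      ← Finset.prod_Ico_add']
    refine Finset.prod_congr rfl fun k _ => ?_
    congr 2
    simp [ysub]
    omega

lemma bialt {A : Type*} [CommRing A] : ∀ (n : ℕ) (x : Fin n → A) (y : ℤ → A)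
    (lam : Fin n → ℕ) (_ : Antitone lam),
    vdm n x * genS x y lam =
      (Matrix.of fun i j : Fin n => fpw (fun k => y ((k : ℤ) + 1)) (x j)
        (lam i + (n - 1 - i.val))).det := by
  intro n
  induction n with
  | zero =>
    intro x y lam _
    have : genS x y lam = 1 := by
      have : IsEmpty (cells lam) := ⟨fun c => c.1.1.elim0⟩
      rw [genS, Finset.filter_true_of_mem]
      · simp
      · intro T _
        exact ⟨fun c => isEmptyElim c, fun c => isEmptyElim c⟩
    simp [vdm, this]
  | succ n ih =>
    intro x y lam hl
    rw [det_branch _ _ _ ?_, branch x y lam hl, vdm, mul_assoc]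
    · congr 1
      rw [Finset.mul_sum]
      refine Finset.sum_bij' (fun nu _ i => nu i + (n - 1 - i.val))
        (fun m _ i => m i - (n - 1 - i.val)) ?_ ?_ ?_ ?_ ?_
      · intro nu hnu
        rw [mem_interl] at hnu
        rw [Fintype.mem_piFinset]
        intro i
        have := hnu i
        have hi := i.2
        simp only [Finset.mem_Ico, Fin.val_succ, Fin.val_castSucc]
        omega
      · intro m hm
        rw [Fintype.mem_piFinset] at hm
        rw [mem_interl]
        intro i
        have := hm i
        have hi := i.2
        simp only [Finset.mem_Ico, Fin.val_succ, Fin.val_castSucc] at this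
        beta_reduce
        omega
      · intro nu _
        ext i; simp
      · intro m hm
        rw [Fintype.mem_piFinset] at hm
        ext i
        have := hm i
        have hi := i.2
        simp only [Finset.mem_Ico, Fin.val_succ, Fin.val_castSucc] at this
        beta_reduce
        omega
      · intro nu hnu
        rw [← ih _ _ _ (interl_anti lam hl nu hnu), strip_eq]
        simp only [Fin.val_last, Fin.val_castSucc, Nat.add_sub_cancel, Nat.sub_self, Nat.add_zero]
        ring
    · intro i j hij
      have := hl hij
      rw [Fin.le_def] at hij
      simp only
      omega

lemma coeff_prod_aeval {R : Type*} [CommRing R] {n : ℕ} (f : Fin n → Polynomial R)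
    (d : Fin n → ℕ) :
    MvPolynomial.coeff (Finsupp.equivFunOnFinite.symm d)
      (∏ i, Polynomial.aeval (X i : MvPolynomial (Fin n) R) (f i)) = ∏ i, (f i).coeff (d i) := by
  have h1 : ∀ i, Polynomial.aeval (X i : MvPolynomial (Fin n) R) (f i)
      = ∑ k ∈ (f i).support, C ((f i).coeff k) * X i ^ k := by
    intro i
    rw [Polynomial.aeval_def, Polynomial.eval₂_eq_sum, Polynomial.sum]
    rfl
  simp only [h1]
  rw [Finset.prod_univ_sum]
  have h2 : ∀ k : Fin n → ℕ, ∏ i, (C ((f i).coeff (k i)) * X i ^ k i : MvPolynomial (Fin n) R)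
      = monomial (Finsupp.equivFunOnFinite.symm k) (∏ i, (f i).coeff (k i)) := by
    intro k
    rw [Finset.prod_mul_distrib, monomial_eq, map_prod, Finsupp.prod_fintype]
    · simp
    · simp
  simp only [h2, MvPolynomial.coeff_sum, coeff_monomial, EmbeddingLike.apply_eq_iff_eq]
  rw [Finset.sum_ite_eq']
  split_ifs with h
  · rfl
  · simp only [Fintype.mem_piFinset, Polynomial.mem_support_iff, not_forall, not_not] at h
    obtain ⟨i, hi⟩ := h
    exact (Finset.prod_eq_zero (Finset.mem_univ i) hi).symm

lemma coeff_det {R : Type*} [CommRing R] {n : ℕ} (Y : ℕ → R) (l d : Fin n → ℕ) :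
    MvPolynomial.coeff (Finsupp.equivFunOnFinite.symm d)
      (Matrix.of fun i j : Fin n => fpw (fun k => C (Y k)) (X j : MvPolynomial (Fin n) R)
        (l i)).det =
    (Matrix.of fun i j : Fin n => (fpw (fun k => Polynomial.C (Y k)) Polynomial.X (l i)).coeff
      (d j)).det := by
  rw [Matrix.det_apply, Matrix.det_apply, MvPolynomial.coeff_sum]
  refine Finset.sum_congr rfl fun σ _ => ?_
  have : ∀ i, (Matrix.of fun i j : Fin n => fpw (fun k => C (Y k)) (X j : MvPolynomial (Fin n) R)
        (l i)) (σ i) i = Polynomial.aeval (X i : MvPolynomial (Fin n) R)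
          (fpw (fun k => Polynomial.C (Y k)) Polynomial.X (l (σ i))) := by
    intro i
    simp [fpw, map_prod, MvPolynomial.algebraMap_eq]
  simp only [this]
  rw [Units.smul_def, Units.smul_def, MvPolynomial.coeff_smul, coeff_prod_aeval]
  rfl

lemma eY_eq (p k : ℕ) : (fpw (fun k => Polynomial.C (X ((k : ℤ) + 1) : MvPolynomial ℤ ℤ))
    Polynomial.X p).coeff k = eY p ((p : ℤ) - k) := by
  have h0 : fpw (fun k => Polynomial.C (X ((k : ℤ) + 1) : MvPolynomial ℤ ℤ)) Polynomial.X p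
      = ∏ j ∈ (Finset.range p).image (fun k : ℕ => (k + 1 : ℤ)),
        (Polynomial.X + Polynomial.C (X j)) := by
    rw [Finset.prod_image (by intro a _ b _ h; simpa using h)]
    rfl
  have hcard : ((Finset.range p).image (fun k : ℕ => (k + 1 : ℤ))).card = p := by
    rw [Finset.card_image_of_injective _ (by intro a b h; simpa using h), Finset.card_range]
  rw [eY]
  split_ifs with h
  · rw [h0, Finset.prod_X_add_C_coeff _ _ (by rw [hcard]; omega), hcard,
      show ((p : ℤ) - k).toNat = p - k by omega]
    congr 2
    ext v
    simp only [Finset.bind_def]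
    simp
    exact exists_congr fun a => and_congr_right fun _ => by omega
  · rw [h0]
    apply Polynomial.coeff_eq_zero_of_natDegree_lt
    refine lt_of_le_of_lt (Polynomial.natDegree_prod_le _ _) ?_
    simp only [Polynomial.natDegree_X_add_C, Finset.sum_const, hcard]
    simp; omega

lemma det_delta {R : Type*} [CommRing R] {n : ℕ} (l d : Fin n → ℕ) (hl : StrictAnti l)
    (hd : StrictAnti d) :
    (Matrix.of fun i j : Fin n => (fpw (fun _ => Polynomial.C (0 : R)) Polynomial.X (l i)).coeff
      (d j)).det = if l = d then 1 else 0 := by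
  have h : ∀ p k, (fpw (fun _ => Polynomial.C (0 : R)) Polynomial.X p).coeff k =
      if k = p then 1 else 0 := by
    intro p k
    simp [fpw, Polynomial.coeff_X_pow]
  simp only [h]
  split_ifs with e
  · subst e
    convert Matrix.det_one (n := Fin n) (R := R) using 2
    ext i j
    simp [Matrix.one_apply, hl.injective.eq_iff, eq_comm]
  · rw [Matrix.det_apply]
    refine Finset.sum_eq_zero fun σ _ => ?_
    by_cases hσ : ∀ i, d i = l (σ i)
    · exfalso
      apply e
      have h1 : StrictMono (fun i => OrderDual.toDual (l i)) := fun a b hab => hl hab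
      have h2 : StrictMono (fun i => OrderDual.toDual (d i)) := fun a b hab => hd hab
      refine (StrictMono.range_inj h1 h2).1 ?_
      ext v
      constructor
      · rintro ⟨i, rfl⟩
        exact ⟨σ.symm i, by simp [hσ]⟩
      · rintro ⟨i, rfl⟩
        exact ⟨σ i, by simp [hσ]⟩
    · push Not at hσ
      obtain ⟨i, hi⟩ := hσ
      rw [Finset.prod_eq_zero (Finset.mem_univ i), smul_zero]
      simp [hi]

lemma strictAnti_delta {n : ℕ} (lam : Fin n → ℕ) (h : Antitone lam) :
    StrictAnti (fun i : Fin n => lam i + (n - 1 - i.val)) := by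
  intro i j hij
  have := h hij.le
  rw [Fin.lt_def] at hij
  have := j.2
  simp only
  omega

/-- Proposition 4.1(i), Macdonald's formula: the coefficient
`c_{λ,n}^μ(y)` in `s_λ(x_{(n)}|y) = Σ_μ c_{λ,n}^μ(y) s_μ(x_{(n)})` is
`det( e_{λ_i - μ_j - i + j}(y_1, …, y_{λ_i + n - i}) )_{1 ≤ i,j ≤ n}`. -/
theorem change_of_basis_c_det (n : ℕ) (hn : 1 ≤ n)
    (lam : Fin n → ℕ) (hlam : IsPartition lam)
    (c : (Fin n → ℕ) →₀ MvPolynomial ℤ ℤ)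
    (hsupp : ∀ μ, c μ ≠ 0 → IsPartition μ)
    (hexp : factSchurN n lam = c.sum fun μ p => rename Sum.inr p * schurN n μ)
    (mu : Fin n → ℕ) (hmu : IsPartition mu) :
    c mu = Matrix.det (Matrix.of fun i j : Fin n =>
      eY (lam i + (n - 1 - (i : ℕ)))
        ((lam i : ℤ) - (mu j : ℤ) - (i : ℕ) + (j : ℕ))) := by
  classical
  let φ : MvPolynomial (Fin n ⊕ ℤ) ℤ →ₐ[ℤ] MvPolynomial (Fin n) (MvPolynomial ℤ ℤ) :=
    aeval (Sum.elim (fun i => X i) (fun k => C (X k)))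
  have hφ1 : φ (factSchurN n lam) = genS (A := MvPolynomial (Fin n) (MvPolynomial ℤ ℤ)) (fun i => X i) (fun k => C (X k)) lam := by
    simp [φ, factSchurN, genS, map_sum, map_prod]
  have hφ2 : ∀ μ, φ (schurN n μ) = genS (A := MvPolynomial (Fin n) (MvPolynomial ℤ ℤ)) (fun i => X i) (fun _ => C 0) μ := by
    intro μ
    simp [φ, schurN, genS, map_sum, map_prod]
  have hφ3 : ∀ p, φ (rename Sum.inr p) = C p := by
    intro p
    have : (φ.comp (rename Sum.inr)) = (IsScalarTower.toAlgHom ℤ (MvPolynomial ℤ ℤ)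
        (MvPolynomial (Fin n) (MvPolynomial ℤ ℤ))) := by
      ext k
      simp [φ, MvPolynomial.algebraMap_eq]
    exact DFunLike.congr_fun this p
  have h1 := congrArg (fun q => MvPolynomial.coeff
    (Finsupp.equivFunOnFinite.symm fun i : Fin n => mu i + (n - 1 - i.val))
    (vdm n (fun i => X i) * φ q)) hexp
  simp only [hφ1] at h1
  rw [bialt n _ _ lam hlam, coeff_det (fun k => X ((k : ℤ) + 1))] at h1
  simp only [eY_eq] at h1
  have h2 : MvPolynomial.coeff
    (Finsupp.equivFunOnFinite.symm fun i : Fin n => mu i + (n - 1 - i.val))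
    (vdm n (fun i => X i) * φ (c.sum fun μ p => rename Sum.inr p * schurN n μ)) = c mu := by
    rw [Finsupp.sum, map_sum, Finset.mul_sum, MvPolynomial.coeff_sum]
    have : ∀ μ ∈ c.support, MvPolynomial.coeff
      (Finsupp.equivFunOnFinite.symm fun i : Fin n => mu i + (n - 1 - i.val))
      (vdm n (fun i => X i) * φ (rename Sum.inr (c μ) * schurN n μ)) =
        if μ = mu then c μ else 0 := by
      intro μ hμ
      have hp := hsupp μ (Finsupp.mem_support_iff.1 hμ)
      rw [map_mul, hφ2, hφ3, mul_left_comm, coeff_C_mul, bialt n _ _ μ hp,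
        coeff_det (fun k => 0), det_delta _ _ (strictAnti_delta μ hp) (strictAnti_delta mu hmu)]
      have : ((fun i : Fin n => μ i + (n - 1 - i.val)) = fun i : Fin n => mu i + (n - 1 - i.val))
          ↔ μ = mu := by
        simp [funext_iff]
      simp only [this]
      split_ifs <;> simp
    rw [Finset.sum_congr rfl this, Finset.sum_ite_eq']
    split_ifs with h
    · rfl
    · exact (Finsupp.notMem_support_iff.1 h).symm
  rw [h2] at h1
  rw [← h1]
  congr 1
  ext1 i j
  simp only [Matrix.of_apply]
  congr 1
  have := i.2
  have := j.2
  push_cast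
  omega
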